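/- arXiv:2105.07247 — 3 statements merged into one kernel-verified Lean document; each statement's English description precedes it below -/
import Mathlib

section
/- Let G be a finite group and N a normal subgroup with Q = G/N abelian. Then the number of conjugacy classes of G contained in N equals the number of orbits of the action of Q̂ on the set of complex irreducible characters of G. -/
open scoped BigOperators

/-- `ρ : G → ℂ` is the character of an irreducible (simple) finite-dimensional
complex representation of `G`. -/
def IsIrrChar (G : Type) [Group G] (ρ : G → ℂ) : Prop :=
  ∃ V : FDRep ℂ G, CategoryTheory.Simple V ∧ ρ = V.character

/-- `Θ : G → ℂ` is the character of some finite-dimensional complex representation of `G`. -/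
def IsChar (G : Type) [Group G] (Θ : G → ℂ) : Prop :=
  ∃ V : FDRep ℂ G, Θ = V.character

variable {G : Type} [Group G]

/-- The action of a character `χ ∈ Q̂` (where `Q = G ⧸ N`) on a function `ρ : G → ℂ`:
`(χ · ρ)(g) = χ(gN) · ρ(g)`. -/
def charMul (N : Subgroup G) [N.Normal] (χ : (G ⧸ N) →* ℂˣ) (ρ : G → ℂ) : G → ℂ :=
  fun g => (χ (g : G ⧸ N) : ℂ) * ρ g

/-- The orbit of `ρ` under the tensoring action of `Q̂ = Hom(G ⧸ N, ℂˣ)`. -/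
def qhatOrbit (N : Subgroup G) [N.Normal] (ρ : G → ℂ) : Set (G → ℂ) :=
  {ρ' | ∃ χ : (G ⧸ N) →* ℂˣ, ρ' = charMul N χ ρ}

/-- The coset `qN`, as a subset of `G`. -/
def coset (N : Subgroup G) [N.Normal] (q : G) : Set G :=
  {g | (g : G ⧸ N) = (q : G ⧸ N)}

/-- `C_q`: the set of conjugacy classes of `G` contained in the coset `qN`. -/
def Cset (N : Subgroup G) [N.Normal] (q : G) : Set (ConjClasses G) :=
  {c | c.carrier ⊆ coset N q}

/-- `R_q`: the set of `Q̂`-orbits on the irreducible characters of `G`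
containing a character not identically zero on `qN`. -/
def Rset (N : Subgroup G) [N.Normal] (q : G) : Set (Set (G → ℂ)) :=
  {S | (∃ ρ, IsIrrChar G ρ ∧ S = qhatOrbit N ρ) ∧ ∃ ρ' ∈ S, ∃ g ∈ coset N q, ρ' g ≠ 0}

/-- The class function `π_x` for `x ∈ Q = G ⧸ N`:
`π_x(g) = (1/#Q̂) ∑_{χ ∈ Q̂} conj(χ(x)) χ(gN)`. -/
noncomputable def piQ (N : Subgroup G) [N.Normal] (x : G ⧸ N) : G → ℂ :=
  fun g => (Nat.card ((G ⧸ N) →* ℂˣ) : ℂ)⁻¹ *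
    ∑ᶠ χ : (G ⧸ N) →* ℂˣ, (starRingEnd ℂ) (χ x : ℂ) * (χ (g : G ⧸ N) : ℂ)

/-- The space of class functions on `G`, as a submodule of `G → ℂ`. -/
noncomputable def classFunSubmodule (G : Type) [Group G] : Submodule ℂ (G → ℂ) where
  carrier := {f | ∀ g h : G, f (h * g * h⁻¹) = f g}
  add_mem' := by intro a b ha hb g h; simp only [Pi.add_apply, ha g h, hb g h]
  zero_mem' := by intro g h; rfl
  smul_mem' := by intro c f hf g h; simp only [Pi.smul_apply, hf g h]

/-- The space of class functions on `G` vanishing outside the coset `qN`. -/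
noncomputable def cosetClassFun (N : Subgroup G) [N.Normal] (q : G) : Submodule ℂ (G → ℂ) where
  carrier := {f | (∀ g h : G, f (h * g * h⁻¹) = f g) ∧ ∀ g, g ∉ coset N q → f g = 0}
  add_mem' := by
    intro a b ha hb
    exact ⟨fun g h => by simp only [Pi.add_apply, ha.1 g h, hb.1 g h],
      fun g hg => by simp only [Pi.add_apply, ha.2 g hg, hb.2 g hg, add_zero]⟩
  zero_mem' := ⟨fun g h => rfl, fun g hg => rfl⟩
  smul_mem' := by
    intro c f hf
    exact ⟨fun g h => by simp only [Pi.smul_apply, hf.1 g h],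
      fun g hg => by simp only [Pi.smul_apply, hf.2 g hg, smul_zero]⟩

/-!
Both counts are the dimension of the space of class functions on `G` supported on a coset `qN`, and
the case `q = 1` is the theorem. One basis consists of the indicators of the conjugacy classes
contained in `qN`. The other consists of the restrictions to `qN` of irreducible characters, one for
each `Q̂`-orbit not vanishing there. These span because the irreducible characters span all class
functions and `χ · ρ` agrees with `χ(q) ρ` on `qN`. They are linearly independent because, by
orthogonality of the characters of `Q`, the restriction of `ρ` to `qN`, extended by zero, is
`π_q ρ = |Q̂|⁻¹ ∑_χ conj(χ(q)) χ · ρ`. This lies in the span of the orbit of `ρ`, and spans of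
distinct orbits are independent.

That the irreducible characters span comes from the group algebra: a class function `f` orthogonal
to all of them gives a central element `∑ f(g) g⁻¹` acting on every simple module as a scalar of
trace zero, hence as zero, so it lies in the Jacobson radical, which is trivial.
-/

section CentralElements

variable {k A : Type*} [Field k] [CharZero k] [IsAlgClosed k] [Ring A] [Algebra k A]

theorem smul_eq_zero_of_mem_center_of_trace_eq_zero {M : Type*} [AddCommGroup M] [Module k M]
    [Module A M] [IsScalarTower k A M] [FiniteDimensional k M] [IsSimpleModule A M] {z : A}
    (hz : z ∈ Set.center A) (htr : LinearMap.trace k M (Algebra.lsmul k k M z) = 0) (x : M) :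
    z • x = 0 := by
  let T : Module.End A M :=
    { Algebra.lsmul k k M z with
      map_smul' := fun a y ↦ by
        change z • a • y = a • z • y
        rw [smul_smul, smul_smul, (Set.mem_center_iff.mp hz).comm] }
  obtain ⟨c, hc⟩ := (IsSimpleModule.algebraMap_end_bijective_of_isAlgClosed k).surjective T
  have act_eq_smul (y : M) : z • y = c • y := (LinearMap.congr_fun hc y).symm
  have trace_eq : c * Module.finrank k M = 0 := by
    have : Algebra.lsmul k k M z = c • LinearMap.id := LinearMap.ext act_eq_smul
    simpa only [this, map_smul, LinearMap.trace_id, smul_eq_mul] using htr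
  have : Nontrivial M := IsSimpleModule.nontrivial A M
  have c_eq_zero : c = 0 :=
    (mul_eq_zero.mp trace_eq).resolve_right (Nat.cast_ne_zero.mpr Module.finrank_pos.ne')
  rw [act_eq_smul, c_eq_zero, zero_smul]

theorem eq_zero_of_mem_center_of_forall_trace_quotient_eq_zero [FiniteDimensional k A]
    [IsSemisimpleRing A] {z : A} (hz : z ∈ Set.center A)
    (htr : ∀ m : Submodule A A, IsCoatom m →
      LinearMap.trace k (A ⧸ m) (Algebra.lsmul k k (A ⧸ m) z) = 0) : z = 0 := by
  have mem_jacobson : z ∈ Module.jacobson A A := by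
    refine (Submodule.mem_sInf).mpr fun m hm ↦ ?_
    have : IsSimpleModule A (A ⧸ m) := isSimpleModule_iff_isCoatom.mpr hm
    have : FiniteDimensional k (A ⧸ m) := Module.Finite.trans A _
    have act_one : z • (Submodule.Quotient.mk 1 : A ⧸ m) = 0 :=
      smul_eq_zero_of_mem_center_of_trace_eq_zero hz (htr m hm) _
    rwa [← Submodule.Quotient.mk_smul, smul_eq_mul, mul_one,
      Submodule.Quotient.mk_eq_zero] at act_one
  rwa [IsSemisimpleModule.jacobson_eq_bot, Submodule.mem_bot] at mem_jacobson

end CentralElements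

section IrreducibleCharacters

open scoped MonoidAlgebra

section OfModule

variable {k H M : Type*} [Field k] [Monoid H] [AddCommGroup M] [Module k M] [Module k[H] M]
  [IsScalarTower k k[H] M]

theorem asAlgebraHom_ofModule' :
    (Representation.ofModule' M : Representation k H M).asAlgebraHom = Algebra.lsmul k k M :=
  (MonoidAlgebra.lift k (Module.End k M) H).apply_symm_apply _

theorem isIrreducible_ofModule' [IsSimpleModule k[H] M] :
    (Representation.ofModule' M : Representation k H M).IsIrreducible := by
  let σ : Representation k H M := Representation.ofModule' M
  let e : σ.asModule ≃ₗ[k[H]] M :=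
    { σ.asModuleEquiv.toAddEquiv with
      map_smul' := fun a x ↦ (σ.asModuleEquiv_map_smul a x).trans <| by
        rw [asAlgebraHom_ofModule']
        rfl }
  exact (Representation.irreducible_iff_isSimpleModule_asModule σ).mpr (IsSimpleModule.congr e)

end OfModule

theorem isIrrChar_character [Finite G] {V : Type} [AddCommGroup V] [Module ℂ V]
    [FiniteDimensional ℂ V] (σ : Representation ℂ G V) [σ.IsIrreducible] :
    IsIrrChar G σ.character := by
  have := Fintype.ofFinite G
  have := invertibleOfNonzero (NeZero.ne (Nat.card G : ℂ))
  refine ⟨FDRep.of σ, (FDRep.simple_iff_char_is_norm_one _).mpr ?_, rfl⟩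
  have orthonormal := Representation.char_orthonormal σ σ
  rw [if_pos ⟨Representation.Equiv.refl σ⟩,
    inv_mul_eq_one₀ (NeZero.ne (Nat.card G : ℂ))] at orthonormal
  exact orthonormal.symm

namespace IsIrrChar

variable {ρ : G → ℂ}

theorem mem_classFunSubmodule (hρ : IsIrrChar G ρ) : ρ ∈ classFunSubmodule G := by
  obtain ⟨V, -, rfl⟩ := hρ
  exact V.char_conj

theorem sum_mul_inv_eq_card [Fintype G] (hρ : IsIrrChar G ρ) :
    ∑ g, ρ g * ρ g⁻¹ = Nat.card G := by
  obtain ⟨V, hV, rfl⟩ := hρ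
  exact (FDRep.simple_iff_char_is_norm_one V).mp hV

theorem apply_one_ne_zero [Finite G] (hρ : IsIrrChar G ρ) : ρ 1 ≠ 0 := by
  have := Fintype.ofFinite G
  intro apply_one
  have norm := hρ.sum_mul_inv_eq_card
  obtain ⟨V, -, rfl⟩ := hρ
  rw [FDRep.char_one, Nat.cast_eq_zero] at apply_one
  have : Subsingleton V := Module.finrank_zero_iff.mp apply_one
  have character_eq_zero (g : G) : V.character g = 0 := by
    rw [FDRep.character, Subsingleton.elim (V.ρ g) 0, map_zero]
  simp only [character_eq_zero, mul_zero, Finset.sum_const_zero] at norm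
  exact NeZero.ne _ norm.symm

end IsIrrChar

/-- The bilinear form `⟨f, φ⟩ = |G|⁻¹ ∑ g, f g * φ g⁻¹` on functions on `G`. On characters it agrees
with the Hermitian inner product, and irreducible characters are orthonormal for it. -/
noncomputable def charPairing (G : Type) [Group G] [Fintype G] : LinearMap.BilinForm ℂ (G → ℂ) :=
  (Nat.card G : ℂ)⁻¹ • ∑ g : G,
    (LinearMap.mul ℂ ℂ).compl₁₂ (LinearMap.proj g) (LinearMap.proj g⁻¹)

theorem charPairing_apply [Fintype G] (f φ : G → ℂ) :
    charPairing G f φ = (Nat.card G : ℂ)⁻¹ * ∑ g, f g * φ g⁻¹ := by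
  simp [charPairing]

theorem charPairing_eq_zero_iff [Fintype G] {f φ : G → ℂ} :
    charPairing G f φ = 0 ↔ ∑ g, f g * φ g⁻¹ = 0 := by
  rw [charPairing_apply, mul_eq_zero_iff_left (inv_ne_zero (NeZero.ne _))]

theorem charPairing_self [Fintype G] {ρ : G → ℂ} (hρ : IsIrrChar G ρ) :
    charPairing G ρ ρ = 1 := by
  rw [charPairing_apply, hρ.sum_mul_inv_eq_card, inv_mul_cancel₀ (NeZero.ne _)]

theorem charPairing_eq_zero_of_ne [Fintype G] {ρ σ : G → ℂ} (hρ : IsIrrChar G ρ)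
    (hσ : IsIrrChar G σ) (hne : ρ ≠ σ) : charPairing G ρ σ = 0 := by
  have := invertibleOfNonzero (NeZero.ne (Nat.card G : ℂ))
  obtain ⟨V, _, rfl⟩ := hρ
  obtain ⟨W, _, rfl⟩ := hσ
  rw [charPairing_apply, FDRep.char_orthonormal V W,
    if_neg fun ⟨i⟩ ↦ hne (FDRep.char_iso i)]

theorem linearIndepOn_isIrrChar [Finite G] : LinearIndepOn ℂ id {ρ : G → ℂ | IsIrrChar G ρ} := by
  have := Fintype.ofFinite G
  refine LinearMap.linearIndependent_of_isOrthoᵢ (B := charPairing G)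
    (LinearMap.isOrthoᵢ_def.mpr fun ρ σ hne ↦ ?_) fun ρ hself ↦ ?_
  · exact charPairing_eq_zero_of_ne ρ.2 σ.2 (Subtype.coe_injective.ne hne)
  · exact one_ne_zero ((charPairing_self ρ.2).symm.trans hself)

theorem sum_single_inv_mem_center [Fintype G] {f : G → ℂ} (hf : f ∈ classFunSubmodule G) :
    ∑ g, MonoidAlgebra.single g⁻¹ (f g) ∈ Set.center ℂ[G] := by
  rw [Semigroup.mem_center_iff]
  intro a
  induction a using MonoidAlgebra.induction_on with
  | of h =>
    rw [Finset.mul_sum, Finset.sum_mul]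
    refine Fintype.sum_equiv (MulAut.conj h).toEquiv _ _ fun g ↦ ?_
    simpa [MonoidAlgebra.single_mul_single, mul_assoc] using (hf g h).symm
  | add a b ha hb => rw [add_mul, mul_add, ha, hb]
  | smul c a ha => rw [smul_mul_assoc, mul_smul_comm, ha]

theorem eq_zero_of_forall_charPairing_eq_zero [Fintype G] {f : G → ℂ}
    (hf : f ∈ classFunSubmodule G) (horth : ∀ ρ, IsIrrChar G ρ → charPairing G f ρ = 0) :
    f = 0 := by
  let z : ℂ[G] := ∑ g, MonoidAlgebra.single g⁻¹ (f g)
  have z_eq_zero : z = 0 := by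
    refine eq_zero_of_mem_center_of_forall_trace_quotient_eq_zero (k := ℂ)
      (sum_single_inv_mem_center hf) fun m hm ↦ ?_
    have : IsSimpleModule ℂ[G] (ℂ[G] ⧸ m) := isSimpleModule_iff_isCoatom.mpr hm
    have : FiniteDimensional ℂ (ℂ[G] ⧸ m) := Module.Finite.trans ℂ[G] _
    let σ : Representation ℂ G (ℂ[G] ⧸ m) := Representation.ofModule' _
    have : σ.IsIrreducible := isIrreducible_ofModule'
    have pairing := charPairing_eq_zero_iff.mp (horth _ (isIrrChar_character σ))
    simpa only [← asAlgebraHom_ofModule', z, map_sum, Representation.asAlgebraHom_single,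
      map_smul, smul_eq_mul, Representation.character, σ] using pairing
  classical
  funext g
  have coeff := congrArg (fun w : ℂ[G] ↦ w.coeff g⁻¹) z_eq_zero
  simpa [z, Finsupp.single_apply] using coeff

theorem span_isIrrChar [Finite G] :
    Submodule.span ℂ {ρ : G → ℂ | IsIrrChar G ρ} = classFunSubmodule G := by
  have := Fintype.ofFinite G
  refine le_antisymm (Submodule.span_le.mpr fun ρ hρ ↦ hρ.mem_classFunSubmodule) fun f hf ↦ ?_
  have finite_irr : {ρ : G → ℂ | IsIrrChar G ρ}.Finite :=
    (linearIndepOn_isIrrChar (G := G)).linearIndependent.finite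
  let irr : Finset (G → ℂ) := finite_irr.toFinset
  have mem_irr {ρ : G → ℂ} : ρ ∈ irr ↔ IsIrrChar G ρ := finite_irr.mem_toFinset
  let F : G → ℂ := ∑ ρ ∈ irr, charPairing G f ρ • ρ
  have F_mem_span : F ∈ Submodule.span ℂ {ρ : G → ℂ | IsIrrChar G ρ} :=
    Submodule.sum_mem _ fun ρ hρ ↦
      Submodule.smul_mem _ _ (Submodule.subset_span (mem_irr.mp hρ))
  have F_mem_classFun : F ∈ classFunSubmodule G :=
    Submodule.sum_mem _ fun ρ hρ ↦
      Submodule.smul_mem _ _ (mem_irr.mp hρ).mem_classFunSubmodule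
  have pairing_F {σ : G → ℂ} (hσ : IsIrrChar G σ) : charPairing G F σ = charPairing G f σ := by
    simp only [F, map_sum, map_smul, LinearMap.sum_apply, LinearMap.smul_apply, smul_eq_mul]
    rw [Finset.sum_eq_single_of_mem σ (mem_irr.mpr hσ) fun ρ hρ hne ↦ by
      rw [charPairing_eq_zero_of_ne (mem_irr.mp hρ) hσ hne, mul_zero],
      charPairing_self hσ, mul_one]
  have f_sub_F_eq_zero : f - F = 0 :=
    eq_zero_of_forall_charPairing_eq_zero (Submodule.sub_mem _ hf F_mem_classFun) fun σ hσ ↦ by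
      rw [map_sub, LinearMap.sub_apply, pairing_F hσ, sub_self]
  rwa [sub_eq_zero.mp f_sub_F_eq_zero]

end IrreducibleCharacters

section QuotientCharacters

theorem sum_monoidHom_units_apply_eq_zero {A R : Type*} [CommGroup A] [Finite A] [CommRing R]
    [IsDomain R] [HasEnoughRootsOfUnity R (Monoid.exponent A)] [Fintype (A →* Rˣ)] {a : A}
    (ha : a ≠ 1) : ∑ χ : A →* Rˣ, (χ a : R) = 0 := by
  refine sum_hom_units_eq_zero ((Units.coeHom R).comp (MonoidHom.eval a)) fun eval_eq_one ↦ ?_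
  obtain ⟨χ, hχ⟩ := CommGroup.exists_apply_ne_one_of_hasEnoughRootsOfUnity A R ha
  exact hχ (Units.ext (DFunLike.congr_fun eval_eq_one χ))

theorem conj_monoidHom_units_apply {A : Type*} [Group A] [Finite A] (χ : A →* ℂˣ) (a : A) :
    (starRingEnd ℂ) (χ a : ℂ) = (χ a⁻¹ : ℂ) := by
  have norm_eq_one : ‖(χ a : ℂ)‖ = 1 :=
    (((Units.coeHom ℂ).comp χ).isOfFinOrder (isOfFinOrder_of_finite a)).norm_eq_one
  rw [← Complex.inv_eq_conj norm_eq_one, map_inv, Units.val_inv_eq_inv_val]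

variable (N : Subgroup G) [N.Normal]

theorem piQ_mk_eq_indicator [Finite G] (hQ : ∀ a b : G ⧸ N, a * b = b * a) (q : G) :
    piQ N q = (coset N q).indicator 1 := by
  let _ : CommGroup (G ⧸ N) := { mul_comm := hQ }
  have := Fintype.ofFinite ((G ⧸ N) →* ℂˣ)
  funext g
  have piQ_eq : piQ N q g = (Nat.card ((G ⧸ N) →* ℂˣ) : ℂ)⁻¹ *
      ∑ χ : (G ⧸ N) →* ℂˣ, (χ ((q : G ⧸ N)⁻¹ * g) : ℂ) := by
    simp only [piQ, finsum_eq_sum_of_fintype, conj_monoidHom_units_apply, map_mul, Units.val_mul]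
  rw [piQ_eq]
  by_cases hg : g ∈ coset N q
  · have quotient_eq_one : (q : G ⧸ N)⁻¹ * g = 1 := inv_mul_eq_one.mpr hg.symm
    simp [quotient_eq_one, hg, NeZero.ne]
  · have quotient_ne_one : (q : G ⧸ N)⁻¹ * g ≠ 1 := fun h ↦ hg (inv_mul_eq_one.mp h).symm
    rw [sum_monoidHom_units_apply_eq_zero quotient_ne_one, mul_zero,
      Set.indicator_of_notMem hg]

variable {N}

theorem isIrrChar_charMul [Finite G] {ρ : G → ℂ} (hρ : IsIrrChar G ρ) (χ : (G ⧸ N) →* ℂˣ) :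
    IsIrrChar G (charMul N χ ρ) := by
  have := Fintype.ofFinite G
  obtain ⟨V, hV, rfl⟩ := hρ
  let τ : Representation ℂ G V :=
    { toFun := fun g ↦ (χ (g : G ⧸ N) : ℂ) • V.ρ g
      map_one' := by simp
      map_mul' := fun a b ↦ by simp [smul_smul, mul_comm] }
  have character_τ : (FDRep.of τ).character = charMul N χ V.character := by
    funext g
    simp [FDRep.character, charMul, τ]
  refine ⟨FDRep.of τ, ?_, character_τ.symm⟩
  rw [FDRep.simple_iff_char_is_norm_one] at hV ⊢
  rw [← hV, character_τ]
  refine Finset.sum_congr rfl fun g _ ↦ ?_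
  simp only [charMul, QuotientGroup.mk_inv, map_inv]
  rw [mul_mul_mul_comm, Units.mul_inv, one_mul]

theorem mem_qhatOrbit_self (ρ : G → ℂ) : ρ ∈ qhatOrbit N ρ := ⟨1, by funext g; simp [charMul]⟩

theorem IsIrrChar.of_mem_qhatOrbit [Finite G] {ρ σ : G → ℂ} (hρ : IsIrrChar G ρ)
    (hσ : σ ∈ qhatOrbit N ρ) : IsIrrChar G σ := by
  obtain ⟨χ, rfl⟩ := hσ
  exact isIrrChar_charMul hρ χ

theorem qhatOrbit_eq_of_mem {ρ σ : G → ℂ} (hσ : σ ∈ qhatOrbit N ρ) :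
    qhatOrbit N σ = qhatOrbit N ρ := by
  obtain ⟨χ, rfl⟩ := hσ
  ext τ
  constructor
  · rintro ⟨φ, rfl⟩
    exact ⟨φ * χ, by funext g; simp [charMul, mul_assoc]⟩
  · rintro ⟨φ, rfl⟩
    exact ⟨φ * χ⁻¹, by funext g; simp [charMul, mul_assoc]⟩

theorem disjoint_qhatOrbit {ρ σ : G → ℂ} (hne : qhatOrbit N ρ ≠ qhatOrbit N σ) :
    Disjoint (qhatOrbit N ρ) (qhatOrbit N σ) :=
  Set.disjoint_left.mpr fun _ hρ hσ ↦
    hne ((qhatOrbit_eq_of_mem hρ).symm.trans (qhatOrbit_eq_of_mem hσ))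

theorem indicator_coset_charMul (q : G) (χ : (G ⧸ N) →* ℂˣ) (ρ : G → ℂ) :
    (coset N q).indicator (charMul N χ ρ) = (χ q : ℂ) • (coset N q).indicator ρ := by
  funext g
  by_cases hg : g ∈ coset N q
  · have mk_eq : (g : G ⧸ N) = q := hg
    simp [hg, charMul, mk_eq]
  · simp [hg]

theorem piQ_mul_mem_span_qhatOrbit [Finite G] (x : G ⧸ N) (ρ : G → ℂ) :
    piQ N x * ρ ∈ Submodule.span ℂ (qhatOrbit N ρ) := by
  have := Fintype.ofFinite ((G ⧸ N) →* ℂˣ)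
  have expansion : piQ N x * ρ = (Nat.card ((G ⧸ N) →* ℂˣ) : ℂ)⁻¹ •
      ∑ χ : (G ⧸ N) →* ℂˣ, (starRingEnd ℂ) (χ x : ℂ) • charMul N χ ρ := by
    funext g
    simp [piQ, charMul, finsum_eq_sum_of_fintype, Finset.sum_mul, mul_assoc]
  rw [expansion]
  exact Submodule.smul_mem _ _ <| Submodule.sum_mem _ fun χ _ ↦
    Submodule.smul_mem _ _ (Submodule.subset_span ⟨χ, rfl⟩)

theorem indicator_coset_mem_span_qhatOrbit [Finite G] (hQ : ∀ a b : G ⧸ N, a * b = b * a) (q : G)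
    (ρ : G → ℂ) : (coset N q).indicator ρ ∈ Submodule.span ℂ (qhatOrbit N ρ) := by
  have piQ_mul_eq : piQ N q * ρ = (coset N q).indicator ρ := by
    rw [piQ_mk_eq_indicator N hQ]
    funext g
    by_cases hg : g ∈ coset N q <;> simp [hg]
  exact piQ_mul_eq ▸ piQ_mul_mem_span_qhatOrbit (q : G ⧸ N) ρ

theorem indicator_coset_ne_zero_iff {q : G} {ρ : G → ℂ} :
    (coset N q).indicator ρ ≠ 0 ↔ ∃ g ∈ coset N q, ρ g ≠ 0 := by
  simp only [Ne, Set.indicator_eq_zero', Set.not_disjoint_iff, Function.mem_support, and_comm]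

theorem qhatOrbit_mem_Rset_iff {q : G} {ρ : G → ℂ} (hρ : IsIrrChar G ρ) :
    qhatOrbit N ρ ∈ Rset N q ↔ (coset N q).indicator ρ ≠ 0 := by
  rw [indicator_coset_ne_zero_iff]
  constructor
  · rintro ⟨-, _, ⟨χ, rfl⟩, g, hg, hne⟩
    exact ⟨g, hg, right_ne_zero_of_mul hne⟩
  · exact fun hne ↦ ⟨⟨ρ, hρ, rfl⟩, ρ, mem_qhatOrbit_self ρ, hne⟩

end QuotientCharacters

section CosetClassFunctions

theorem iSupIndep_span_of_pairwise_disjoint {ι R M : Type*} [Ring R] [AddCommGroup M] [Module R M]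
    {t : Set M} (ht : LinearIndepOn R id t) {s : ι → Set M} (hst : ∀ i, s i ⊆ t)
    (hs : Pairwise (Function.onFun Disjoint s)) : iSupIndep fun i ↦ Submodule.span R (s i) := by
  intro i
  have disjoint_others : Disjoint (s i) (⋃ (j) (_ : j ≠ i), s j) :=
    Set.disjoint_iUnion₂_right.mpr fun j hj ↦ hs hj.symm
  have others_subset : ⋃ (j) (_ : j ≠ i), s j ⊆ t := Set.iUnion₂_subset fun j _ ↦ hst j
  have disjoint_span :=
    LinearIndependent.disjoint_span_image ht (disjoint_others.preimage Subtype.val)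
  simpa only [Submodule.iSup_span, id_eq, Subtype.image_preimage_coe,
    Set.inter_eq_self_of_subset_right (hst i),
    Set.inter_eq_self_of_subset_right others_subset] using disjoint_span

variable {N : Subgroup G} [N.Normal]

theorem linearIndependent_indicator_coset [Finite G] (hQ : ∀ a b : G ⧸ N, a * b = b * a) {q : G}
    {ι : Type*} {r : ι → G → ℂ} (hr : ∀ i, IsIrrChar G (r i))
    (hinj : Function.Injective fun i ↦ qhatOrbit N (r i))
    (hne : ∀ i, (coset N q).indicator (r i) ≠ 0) :
    LinearIndependent ℂ fun i ↦ (coset N q).indicator (r i) := by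
  have orbit_spans_indep : iSupIndep fun i ↦ Submodule.span ℂ (qhatOrbit N (r i)) :=
    iSupIndep_span_of_pairwise_disjoint linearIndepOn_isIrrChar
      (fun i _ hσ ↦ (hr i).of_mem_qhatOrbit hσ) fun _ _ hij ↦ disjoint_qhatOrbit (hinj.ne hij)
  exact orbit_spans_indep.linearIndependent _
    (fun i ↦ indicator_coset_mem_span_qhatOrbit hQ q (r i)) hne

theorem conj_mem_coset_iff (hQ : ∀ a b : G ⧸ N, a * b = b * a) {q g h : G} :
    h * g * h⁻¹ ∈ coset N q ↔ g ∈ coset N q := by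
  have mk_conj : ((h * g * h⁻¹ : G) : G ⧸ N) = g := by
    rw [QuotientGroup.mk_mul, hQ, ← QuotientGroup.mk_mul, inv_mul_cancel_left]
  exact Iff.of_eq (congrArg (· = (q : G ⧸ N)) mk_conj)

theorem indicator_coset_mem_cosetClassFun (hQ : ∀ a b : G ⧸ N, a * b = b * a) (q : G) {f : G → ℂ}
    (hf : f ∈ classFunSubmodule G) : (coset N q).indicator f ∈ cosetClassFun N q := by
  classical
  refine ⟨fun g h ↦ ?_, fun g hg ↦ Set.indicator_of_notMem hg f⟩
  simp only [Set.indicator_apply, conj_mem_coset_iff hQ, hf g h]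

theorem span_range_indicator_coset [Finite G] (hQ : ∀ a b : G ⧸ N, a * b = b * a) {q : G}
    {ι : Type*} {r : ι → G → ℂ} (hr : ∀ i, IsIrrChar G (r i))
    (hcover : ∀ ρ, IsIrrChar G ρ → (coset N q).indicator ρ ≠ 0 → ∃ i, ρ ∈ qhatOrbit N (r i)) :
    Submodule.span ℂ (Set.range fun i ↦ (coset N q).indicator (r i)) = cosetClassFun N q := by
  refine le_antisymm (Submodule.span_le.mpr ?_) fun f hf ↦ ?_
  · rintro _ ⟨i, rfl⟩
    exact indicator_coset_mem_cosetClassFun hQ q (hr i).mem_classFunSubmodule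
  have f_mem_span : f ∈ Submodule.span ℂ {ρ | IsIrrChar G ρ} := span_isIrrChar.ge hf.1
  have indicator_eq : (coset N q).indicator f = f :=
    Set.indicator_eq_self.mpr fun g hg ↦ not_imp_comm.mp (hf.2 g) hg
  rw [← indicator_eq]
  clear hf indicator_eq
  induction f_mem_span using Submodule.span_induction with
  | mem ρ hρ =>
    by_cases hne : (coset N q).indicator ρ = 0
    · exact hne ▸ Submodule.zero_mem _
    · obtain ⟨i, χ, rfl⟩ := hcover ρ hρ hne
      rw [indicator_coset_charMul]
      exact Submodule.smul_mem _ _ (Submodule.subset_span ⟨i, rfl⟩)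
  | zero =>
    rw [Set.indicator_zero']
    exact Submodule.zero_mem _
  | add f₁ f₂ _ _ h₁ h₂ => exact Set.indicator_add' _ f₁ f₂ ▸ Submodule.add_mem _ h₁ h₂
  | smul c f _ h => exact Set.indicator_const_smul _ c f ▸ Submodule.smul_mem _ c h

theorem finrank_cosetClassFun_eq_ncard_Rset [Finite G] (hQ : ∀ a b : G ⧸ N, a * b = b * a)
    (q : G) : Module.finrank ℂ (cosetClassFun N q) = (Rset N q).ncard := by
  choose r r_irr orbit_r using fun S : Rset N q ↦ S.2.1
  have indicator_r_ne_zero (S : Rset N q) : (coset N q).indicator (r S) ≠ 0 :=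
    (qhatOrbit_mem_Rset_iff (r_irr S)).mp (orbit_r S ▸ S.2)
  have orbit_injective : Function.Injective fun S ↦ qhatOrbit N (r S) := fun S T h ↦
    Subtype.ext ((orbit_r S).trans (h.trans (orbit_r T).symm))
  have indicators_indep := linearIndependent_indicator_coset hQ r_irr orbit_injective
    indicator_r_ne_zero
  have indicators_span := span_range_indicator_coset (q := q) hQ r_irr fun ρ hρ hne ↦
    let S : Rset N q := ⟨qhatOrbit N ρ, (qhatOrbit_mem_Rset_iff hρ).mpr hne⟩
    ⟨S, orbit_r S ▸ mem_qhatOrbit_self ρ⟩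
  have : Finite (Rset N q) := indicators_indep.finite
  have := Fintype.ofFinite (Rset N q)
  rw [← indicators_span, finrank_span_eq_card indicators_indep, ← Nat.card_eq_fintype_card,
    Nat.card_coe_set_eq]

theorem apply_eq_of_mk_eq_mk {f : G → ℂ} (hf : f ∈ classFunSubmodule G) {g g' : G}
    (h : ConjClasses.mk g = ConjClasses.mk g') : f g = f g' := by
  obtain ⟨a, rfl⟩ := isConj_iff.mp (ConjClasses.mk_eq_mk_iff_isConj.mp h)
  exact (hf g a).symm

theorem mk_mem_Cset_of_apply_ne_zero {q g : G} {f : G → ℂ} (hf : f ∈ cosetClassFun N q)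
    (hne : f g ≠ 0) : ConjClasses.mk g ∈ Cset N q := by
  intro g' hg'
  have apply_eq : f g' = f g := apply_eq_of_mk_eq_mk hf.1 (ConjClasses.mem_carrier_iff_mk_eq.mp hg')
  exact not_imp_comm.mp (hf.2 g') (apply_eq ▸ hne)

theorem finrank_cosetClassFun_eq_ncard_Cset [Finite G] (q : G) :
    Module.finrank ℂ (cosetClassFun N q) = (Cset N q).ncard := by
  classical
  have := Fintype.ofFinite (Cset N q)
  let eval : cosetClassFun N q →ₗ[ℂ] Cset N q → ℂ :=
    LinearMap.funLeft ℂ ℂ (fun c ↦ Quotient.out c.1) ∘ₗ (cosetClassFun N q).subtype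
  have eval_mk (f : cosetClassFun N q) (g : G) (hg : ConjClasses.mk g ∈ Cset N q) :
      eval f ⟨ConjClasses.mk g, hg⟩ = f.1 g :=
    apply_eq_of_mk_eq_mk f.2.1 (Quotient.out_eq (ConjClasses.mk g))
  have eval_injective : Function.Injective eval := by
    refine (injective_iff_map_eq_zero eval).mpr fun f hf ↦ Subtype.ext (funext fun g ↦ ?_)
    by_contra hne
    have mk_mem := mk_mem_Cset_of_apply_ne_zero f.2 hne
    exact hne ((eval_mk f g mk_mem).symm.trans (congrFun hf _))
  have eval_surjective : Function.Surjective eval := by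
    intro φ
    let F (c : ConjClasses G) : ℂ := if hc : c ∈ Cset N q then φ ⟨c, hc⟩ else 0
    have F_mem : (fun g ↦ F (ConjClasses.mk g)) ∈ cosetClassFun N q := by
      refine ⟨fun g h ↦ congrArg F ?_, fun g hg ↦ dif_neg fun hc ↦ ?_⟩
      · exact ConjClasses.mk_eq_mk_iff_isConj.mpr (isConj_iff.mpr ⟨h, rfl⟩).symm
      · exact hg (hc ConjClasses.mem_carrier_mk)
    refine ⟨⟨_, F_mem⟩, funext fun ⟨c, hc⟩ ↦ ?_⟩
    obtain ⟨g, rfl⟩ := ConjClasses.mk_surjective c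
    exact (eval_mk _ g hc).trans (dif_pos hc)
  rw [(LinearEquiv.ofBijective eval ⟨eval_injective, eval_surjective⟩).finrank_eq,
    Module.finrank_fintype_fun_eq_card, ← Nat.card_eq_fintype_card, Nat.card_coe_set_eq]

end CosetClassFunctions

theorem conjClasses_in_N_card_eq_orbits_card_general [Finite G] (N : Subgroup G) [N.Normal]
    (hQ : ∀ a b : G ⧸ N, a * b = b * a) (q : G) : (Cset N q).ncard = (Rset N q).ncard :=
  (finrank_cosetClassFun_eq_ncard_Cset q).symm.trans (finrank_cosetClassFun_eq_ncard_Rset hQ q)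

theorem Cset_one (N : Subgroup G) [N.Normal] :
    Cset N 1 = {c : ConjClasses G | c.carrier ⊆ (N : Set G)} := by
  have coset_one : coset N 1 = N := Set.ext fun g ↦ QuotientGroup.eq_one_iff g
  rw [Cset, coset_one]

theorem Rset_one [Finite G] (N : Subgroup G) [N.Normal] :
    Rset N 1 = {S : Set (G → ℂ) | ∃ ρ, IsIrrChar G ρ ∧ S = qhatOrbit N ρ} := by
  refine Set.ext fun S ↦ and_iff_left_of_imp ?_
  rintro ⟨ρ, hρ, rfl⟩
  exact ⟨ρ, mem_qhatOrbit_self ρ, 1, rfl, hρ.apply_one_ne_zero⟩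

/-- The number of conjugacy classes of `G` contained in `N` equals the
number of `Q̂`-orbits on `Irr G`. -/
theorem conjClasses_in_N_card_eq_orbits_card
    (G : Type) [Group G] [Fintype G] (N : Subgroup G) [N.Normal]
    (hQ : ∀ a b : G ⧸ N, a * b = b * a) :
    {c : ConjClasses G | c.carrier ⊆ (N : Set G)}.ncard =
      {S : Set (G → ℂ) | ∃ ρ, IsIrrChar G ρ ∧ S = qhatOrbit N ρ}.ncard := by
  rw [← Cset_one, ← Rset_one]
  exact conjClasses_in_N_card_eq_orbits_card_general N hQ 1
end

section
/- Let G be a finite group, N a normal subgroup with Q = G/N cyclic, ρ an irreducible complex character of G, and m_ρ = ⟨Res_N ρ, Res_N ρ⟩ (an integer). Then for one-dimensional characters ψ, ψ' of G that are trivial on N, the characters ψ ⊗ ρ and ψ' ⊗ ρ are equal if and only if (ψ/ψ')^{m_ρ} is the trivial character. -/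
open scoped BigOperators

variable {G : Type} [Group G]

/-!
By orthogonality of characters, `⟨χ ⊗ ρ, ρ⟩` is `1` or `0` according to whether `χ ⊗ ρ = ρ`.
Summing over `χ ∈ Q̂` and using `∑ χ, χ = #Q · 1_N` identifies `m_ρ` with the order of the
stabilizer of `ρ` in `Q̂`. Since `Q̂` is cyclic, a subgroup of order `m` is its `m`-torsion.
-/

lemma mem_subgroup_iff_pow_card_eq_one {A : Type*} [CommGroup A] [Finite A] [IsCyclic A]
    (S : Subgroup A) (a : A) : a ∈ S ↔ a ^ Nat.card S = 1 := by
  have S_eq_ker : S = (powMonoidHom (Nat.card S) : A →* A).ker := by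
    refine Subgroup.eq_of_le_of_card_ge (fun b hb ↦ ?_) ?_
    · exact orderOf_dvd_iff_pow_eq_one.mp (S.orderOf_dvd_natCard hb)
    · rw [IsCyclic.card_powMonoidHom_ker]
      exact Nat.gcd_le_right _ Nat.card_pos
  exact SetLike.ext_iff.mp S_eq_ker a

lemma sum_monoidHom_units_apply {Q R : Type*} [CommGroup Q] [Finite Q] [CommRing R] [IsDomain R]
    [HasEnoughRootsOfUnity R (Monoid.exponent Q)] [Fintype (Q →* Rˣ)] [DecidableEq Q] (x : Q) :
    ∑ χ : Q →* Rˣ, (χ x : R) = if x = 1 then (Nat.card Q : R) else 0 := by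
  classical
  have eval_eq_one : (Units.coeHom R).comp (MonoidHom.eval x) = 1 ↔ x = 1 := by
    rw [← CommGroup.forall_apply_eq_apply_iff Q (M := R)]
    simp [MonoidHom.ext_iff]
  have h := sum_hom_units ((Units.coeHom R).comp (MonoidHom.eval x) : (Q →* Rˣ) →* R)
  simp only [eval_eq_one] at h
  rw [Fintype.card_eq_nat_card, CommGroup.card_monoidHom_of_hasEnoughRootsOfUnity Q R] at h
  exact_mod_cast h

section LinearCharacter

variable {G k : Type*} [Monoid G] [CommMonoid k]

/-- The linear characters `ψ` of `G` with `ψ ⊗ f = f`, where `(ψ ⊗ f) g = ψ g * f g`; encoded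
through the pointwise action of `G → kˣ` on `G → k`. -/
def linearCharStabilizer (f : G → k) : Subgroup (G →* kˣ) :=
  (MulAction.stabilizer (G → kˣ) f).comap (MonoidHom.coeFn G kˣ)

lemma mem_linearCharStabilizer_iff {f : G → k} {ψ : G →* kˣ} :
    ψ ∈ linearCharStabilizer f ↔ ∀ g, (ψ g : k) * f g = f g :=
  funext_iff

lemma div_mem_linearCharStabilizer_iff {f : G → k} {ψ ψ' : G →* kˣ} :
    ψ / ψ' ∈ linearCharStabilizer f ↔ ∀ g, (ψ g : k) * f g = ψ' g * f g := by
  rw [mem_linearCharStabilizer_iff]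
  refine forall_congr' fun g ↦ ?_
  rw [MonoidHom.div_apply, div_eq_inv_mul, Units.val_mul, mul_assoc, Units.inv_mul_eq_iff_eq_mul]

end LinearCharacter

section QuotientCharacter

variable {G k : Type*} [Group G] [CommMonoid k] (N : Subgroup G) [N.Normal]

/-- The characters of `G ⧸ N` fixing `f` under `charMul`, over any coefficients `k`. -/
def quotientCharStabilizer (f : G → k) : Subgroup (G ⧸ N →* kˣ) :=
  (linearCharStabilizer f).comap (MonoidHom.compHom' (QuotientGroup.mk' N))

lemma div_mem_quotientCharStabilizer_iff {f : G → k} {χ χ' : G ⧸ N →* kˣ} :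
    χ / χ' ∈ quotientCharStabilizer N f ↔ ∀ g : G, (χ g : k) * f g = χ' g * f g :=
  div_mem_linearCharStabilizer_iff (ψ := χ.comp (QuotientGroup.mk' N))
    (ψ' := χ'.comp (QuotientGroup.mk' N))

end QuotientCharacter

section Twist

open CategoryTheory MonoidalCategory

universe u

/-- The one-dimensional representation `k` on which `g` acts as multiplication by `ψ g`; tensoring
with it realizes the twist of a character by `ψ`. -/
noncomputable def linearRep {k G : Type u} [Field k] [Monoid G] (ψ : G →* kˣ) : FDRep k G :=
  FDRep.of ((Algebra.lmul k k : k →* Module.End k k).comp ((Units.coeHom k).comp ψ))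

lemma linearRep_character {k G : Type u} [Field k] [Monoid G] (ψ : G →* kˣ) (g : G) :
    (linearRep ψ).character g = ψ g :=
  Algebra.trace_self_apply (ψ g : k)

lemma linearRep_tensor_character {k G : Type u} [Field k] [Monoid G] (ψ : G →* kˣ)
    (V : FDRep k G) (g : G) : (linearRep ψ ⊗ V).character g = ψ g * V.character g := by
  rw [FDRep.char_tensor, Pi.mul_apply, linearRep_character]

variable {k G : Type u} [Field k] [IsAlgClosed k] [Group G]

lemma nonempty_iso_iff_character_eq [Finite G] [NeZero (Nat.card G : k)] (V W : FDRep k G)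
    [Simple V] [Simple W] : Nonempty (V ≅ W) ↔ V.character = W.character := by
  classical
  cases nonempty_fintype G
  have := invertibleOfNonzero (NeZero.ne (Nat.card G : k))
  refine ⟨fun ⟨i⟩ ↦ FDRep.char_iso i, fun h ↦ ?_⟩
  have hVW := FDRep.char_orthonormal V W
  rw [h, FDRep.char_orthonormal W W, if_pos ⟨Iso.refl W⟩] at hVW
  by_contra hne
  exact one_ne_zero (hVW.trans (if_neg hne))

variable [CharZero k]

lemma simple_linearRep_tensor [Finite G] (ψ : G →* kˣ) (V : FDRep k G) [Simple V] :
    Simple (linearRep ψ ⊗ V) := by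
  cases nonempty_fintype G
  rw [FDRep.simple_iff_char_is_norm_one, ← (FDRep.simple_iff_char_is_norm_one V).mp inferInstance]
  refine Finset.sum_congr rfl fun g _ ↦ ?_
  rw [linearRep_tensor_character, linearRep_tensor_character, mul_mul_mul_comm, map_inv,
    Units.mul_inv, one_mul]

open Classical in
lemma card_inv_mul_sum_linearChar_mul_character [Fintype G] (ψ : G →* kˣ) (V : FDRep k G)
    [Simple V] :
    (Nat.card G : k)⁻¹ * ∑ g : G, (ψ g : k) * (V.character g * V.character g⁻¹) =
      if ψ ∈ linearCharStabilizer V.character then 1 else 0 := by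
  have := invertibleOfNonzero (NeZero.ne (Nat.card G : k))
  have := simple_linearRep_tensor ψ V
  have iso_iff_mem : Nonempty (linearRep ψ ⊗ V ≅ V) ↔ ψ ∈ linearCharStabilizer V.character := by
    rw [nonempty_iso_iff_character_eq, funext_iff, mem_linearCharStabilizer_iff]
    simp only [linearRep_tensor_character]
  simpa only [linearRep_tensor_character, iso_iff_mem, mul_assoc, Nat.cast_one, Nat.cast_zero]
    using FDRep.char_orthonormal (linearRep ψ ⊗ V) V

open scoped IsMulCommutative in
lemma card_quotientCharStabilizer [Finite G] (N : Subgroup G) [N.Normal]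
    [IsMulCommutative (G ⧸ N)] (V : FDRep k G) [Simple V] :
    (Nat.card (quotientCharStabilizer N V.character) : k) =
      (Nat.card N : k)⁻¹ * ∑ᶠ n ∈ (N : Set G), V.character n * V.character n⁻¹ := by
  classical
  cases nonempty_fintype G
  cases nonempty_fintype (G ⧸ N →* kˣ)
  have hQ : (Nat.card (G ⧸ N) : k) ≠ 0 := NeZero.ne _
  have card_G : (Nat.card G : k) = Nat.card (G ⧸ N) * Nat.card N :=
    mod_cast N.card_eq_card_quotient_mul_card_subgroup
  let c (g : G) : k := V.character g * V.character g⁻¹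
  calc (Nat.card (quotientCharStabilizer N V.character) : k)
      = ∑ χ : G ⧸ N →* kˣ, if χ ∈ quotientCharStabilizer N V.character then 1 else 0 := by
        rw [Finset.sum_boole, Nat.card_eq_fintype_card, Fintype.card_subtype]
    _ = ∑ χ : G ⧸ N →* kˣ, (Nat.card G : k)⁻¹ * ∑ g : G, (χ g : k) * c g :=
        Finset.sum_congr rfl fun χ _ ↦
          (card_inv_mul_sum_linearChar_mul_character (χ.comp (QuotientGroup.mk' N)) V).symm
    _ = (Nat.card G : k)⁻¹ * ∑ g : G, (∑ χ : G ⧸ N →* kˣ, (χ g : k)) * c g := by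
        simp_rw [← Finset.mul_sum, Finset.sum_mul]
        rw [Finset.sum_comm]
    _ = (Nat.card G : k)⁻¹ * (Nat.card (G ⧸ N) * ∑ g : G with g ∈ N, c g) := by
        simp_rw [sum_monoidHom_units_apply, QuotientGroup.eq_one_iff, ite_mul, zero_mul]
        rw [← Finset.sum_filter, ← Finset.mul_sum]
    _ = (Nat.card N : k)⁻¹ * ∑ g : G with g ∈ N, c g := by
        rw [card_G, mul_inv_rev, mul_assoc, inv_mul_cancel_left₀ hQ]
    _ = (Nat.card N : k)⁻¹ * ∑ᶠ n ∈ (N : Set G), c n := by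
        rw [← finsum_mem_coe_finset, Finset.coe_filter_univ]
        rfl

open scoped IsMulCommutative in
theorem tensor_eq_iff_ratio_pow_trivial_general [Finite G] (N : Subgroup G) [N.Normal]
    [IsCyclic (G ⧸ N)] (V : FDRep k G) [Simple V] (m : ℕ)
    (hm : (m : k) = (Nat.card N : k)⁻¹ *
      ∑ᶠ n ∈ (N : Set G), V.character n * V.character n⁻¹)
    (χ χ' : G ⧸ N →* kˣ) :
    (∀ g : G, (χ g : k) * V.character g = χ' g * V.character g) ↔ (χ / χ') ^ m = 1 := by
  obtain ⟨e⟩ := IsCyclic.monoidHom_equiv_self (G ⧸ N) k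
  have : IsCyclic (G ⧸ N →* kˣ) := isCyclic_of_surjective e.symm e.symm.surjective
  have m_eq : m = Nat.card (quotientCharStabilizer N V.character) := by
    exact_mod_cast hm.trans (card_quotientCharStabilizer N V).symm
  rw [m_eq, ← mem_subgroup_iff_pow_card_eq_one, div_mem_quotientCharStabilizer_iff]

end Twist

section ComplexConjugation

open Matrix
open scoped ComplexOrder

variable {n 𝕜 G : Type*} [Fintype n] [DecidableEq n] [RCLike 𝕜]

/-- The sum of the Gram matrices of the `A h`: the matrix of a positive definite Hermitian form,
invariant under `A` when `G` is a group (Weyl's unitary trick). -/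
def gramSum [Monoid G] [Fintype G] (A : G →* Matrix n n 𝕜) : Matrix n n 𝕜 :=
  ∑ h : G, (A h)ᴴ * A h

lemma gramSum_posDef [Monoid G] [Fintype G] (A : G →* Matrix n n 𝕜) : (gramSum A).PosDef := by
  classical
  rw [gramSum, ← Finset.add_sum_erase _ _ (Finset.mem_univ 1), map_one, mul_one,
    conjTranspose_one]
  exact PosDef.one.add_posSemidef
    (posSemidef_sum _ fun h _ ↦ posSemidef_conjTranspose_mul_self (A h))

lemma conjTranspose_mul_gramSum_mul [Group G] [Fintype G] (A : G →* Matrix n n 𝕜) (g : G) :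
    (A g)ᴴ * gramSum A * A g = gramSum A := by
  rw [gramSum, Finset.mul_sum, Finset.sum_mul,
    ← Equiv.sum_comp (Equiv.mulRight g) fun h ↦ (A h)ᴴ * A h]
  refine Finset.sum_congr rfl fun h _ ↦ ?_
  rw [Equiv.coe_mulRight, map_mul, conjTranspose_mul]
  simp only [mul_assoc]

lemma trace_map_inv_eq_star_trace [Group G] [Finite G] (A : G →* Matrix n n 𝕜) (g : G) :
    (A g⁻¹).trace = star (A g).trace := by
  cases nonempty_fintype G
  have hP : IsUnit (gramSum A).det := (isUnit_iff_isUnit_det _).mp (gramSum_posDef A).isUnit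
  have gramSum_mul : gramSum A * A g⁻¹ = (A g)ᴴ * gramSum A := by
    conv_lhs => rw [← conjTranspose_mul_gramSum_mul A g]
    rw [mul_assoc _ (A g), ← map_mul, mul_inv_cancel, map_one, mul_one]
  calc (A g⁻¹).trace
      = ((gramSum A)⁻¹ * (gramSum A * A g⁻¹)).trace := by
        rw [nonsing_inv_mul_cancel_left _ _ hP]
    _ = ((A g)ᴴ * gramSum A * (gramSum A)⁻¹).trace := by rw [gramSum_mul, trace_mul_comm]
    _ = star (A g).trace := by
        rw [mul_nonsing_inv_cancel_right _ _ hP, trace_conjTranspose]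

end ComplexConjugation

lemma character_inv_eq_star {𝕜 G : Type*} [RCLike 𝕜] [Group G] [Finite G] (V : FDRep 𝕜 G)
    (g : G) : V.character g⁻¹ = star (V.character g) := by
  let b := Module.finBasis 𝕜 V
  have trace_eq (h : G) : V.character h = (LinearMap.toMatrixAlgEquiv b (V.ρ h)).trace :=
    LinearMap.trace_eq_matrix_trace 𝕜 b (V.ρ h)
  rw [trace_eq, trace_eq]
  exact trace_map_inv_eq_star_trace
    ((MonoidHomClass.toMonoidHom (LinearMap.toMatrixAlgEquiv b)).comp V.ρ) g

/-- For `G ⧸ N` cyclic, `ρ ∈ Irr G` and `m_ρ = ⟨Res_N ρ, Res_N ρ⟩`, two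
characters `χ, χ' ∈ Q̂` satisfy `χ ⊗ ρ = χ' ⊗ ρ` iff `(χ/χ')^{m_ρ} = 1`. -/
theorem tensor_eq_iff_ratio_pow_trivial
    (G : Type) [Group G] [Fintype G] (N : Subgroup G) [N.Normal]
    (hcyc : IsCyclic (G ⧸ N))
    (ρ : G → ℂ) (hρ : IsIrrChar G ρ) (m : ℕ)
    (hm : (m : ℂ) = (Nat.card ↥N : ℂ)⁻¹ * ∑ᶠ n ∈ (N : Set G), ρ n * (starRingEnd ℂ) (ρ n))
    (χ χ' : (G ⧸ N) →* ℂˣ) :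
    charMul N χ ρ = charMul N χ' ρ ↔ (χ / χ') ^ m = 1 := by
  obtain ⟨V, hV, rfl⟩ := hρ
  have hm_inv : (m : ℂ) = (Nat.card N : ℂ)⁻¹ *
      ∑ᶠ n ∈ (N : Set G), V.character n * V.character n⁻¹ := by
    simpa only [character_inv_eq_star, starRingEnd_apply] using hm
  exact funext_iff.trans (tensor_eq_iff_ratio_pow_trivial_general N V m hm_inv χ χ')
end

section
/- Let G be a finite group and N a normal subgroup with Q = G/N cyclic. Let U be a set of representatives of the Q̂-orbits on Irr G. Then every character Θ of G (i.e. every character of a finite-dimensional complex representation of G) can be written as Θ = Σ_{ρ ∈ U} Ψ_ρ ⊗ ρ, where each Ψ_ρ is either zero or a character of G with N contained in the kernel of the associated representation, and ⊗ denotes the pointwise product of class functions. -/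
open scoped BigOperators

variable {G : Type} [Group G]

/-!
Characters of `G` that are trivial on `N` form a semiring, over which the `Q̂`-action on class
functions is scalar multiplication by one-dimensional characters. Since `U` meets every orbit, its
span over this semiring contains every irreducible character. The trace is additive on short exact
sequences, so every character is a sum of irreducible ones, namely those of its composition factors,
and lies in the span as well.
-/

section CompositionFactors

open CategoryTheory Module

theorem trace_eq_trace_restrict_add_trace_mapQ {R V : Type*} [CommRing R] [AddCommGroup V]
    [Module R V] (W : Submodule R V) [Module.Free R W] [Module.Finite R W]
    [Module.Free R (V ⧸ W)] [Module.Finite R (V ⧸ W)] (f : V →ₗ[R] V) (hf : W ≤ W.comap f) :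
    LinearMap.trace R V f =
      LinearMap.trace R W (f.restrict hf) + LinearMap.trace R (V ⧸ W) (W.mapQ W f hf) := by
  classical
  let bW := Free.chooseBasis R W
  let bQ := Free.chooseBasis R (V ⧸ W)
  rw [LinearMap.trace_eq_matrix_trace R (Basis.sumQuot bW bQ),
    LinearMap.trace_eq_matrix_trace R bW, LinearMap.trace_eq_matrix_trace R bQ]
  simp only [Matrix.trace, Matrix.diag_apply, LinearMap.toMatrix_apply, Fintype.sum_sum_type]
  congr 1 <;> refine Finset.sum_congr rfl fun i _ => ?_
  · rw [Basis.sumQuot_inl]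
    exact Basis.sumQuot_repr_inl_of_mem bW bQ _ (hf (bW i).2) i
  · rw [Basis.sumQuot_repr_inr, ← Basis.sumQuot_inr bW bQ i]
    rfl

theorem character_eq_zero_of_subsingleton {k M V : Type*} [Field k] [Monoid M]
    [AddCommGroup V] [Module k V] [Subsingleton V] (r : Representation k M V) :
    r.character = 0 := by
  ext g
  exact (congrArg (LinearMap.trace k V) (Subsingleton.elim (r g) 0)).trans (map_zero _)

theorem character_eq_subrepresentation_add_quotient {k M V : Type*} [Field k] [Monoid M]
    [AddCommGroup V] [Module k V] [FiniteDimensional k V] (r : Representation k M V)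
    (W : Submodule k V) (hW : ∀ g, W ≤ W.comap (r g)) :
    r.character = (r.subrepresentation W hW).character + (r.quotient W hW).character := by
  ext g
  exact trace_eq_trace_restrict_add_trace_mapQ W (r g) (hW g)

theorem finrank_quotient_lt_finrank {K V : Type*} [DivisionRing K] [AddCommGroup V] [Module K V]
    [FiniteDimensional K V] {W : Submodule K V} (hW : W ≠ ⊥) : finrank K (V ⧸ W) < finrank K V := by
  have h_pos : 1 ≤ finrank K W := Submodule.one_le_finrank_iff.2 hW
  have h_add : finrank K (V ⧸ W) + finrank K W = finrank K V := W.finrank_quotient_add_finrank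
  omega

theorem exists_ne_bot_ne_top_of_not_isIrreducible {k M V : Type*} [Field k] [Monoid M]
    [AddCommGroup V] [Module k V] [Nontrivial V] {r : Representation k M V}
    (hr : ¬ r.IsIrreducible) :
    ∃ W : Subrepresentation r, W.toSubmodule ≠ ⊥ ∧ W.toSubmodule ≠ ⊤ := by
  contrapose! hr
  exact {
    exists_pair_ne := ⟨⊥, ⊤, fun h => bot_ne_top (congrArg Subrepresentation.toSubmodule h)⟩
    eq_bot_or_eq_top := fun W => or_iff_not_imp_left.2 fun hW =>
      Subrepresentation.toSubmodule_injective
        (hr W fun h => hW (Subrepresentation.toSubmodule_injective h)) }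

universe u v

variable {k : Type u} {M : Type v} [Field k] [Monoid M]

theorem simple_of_isIrreducible {V : Type u} [AddCommGroup V] [Module k V] [FiniteDimensional k V]
    (r : Representation k M V) [r.IsIrreducible] : Simple (FDRep.of r) := by
  let F := forget₂ (FDRep k M) (Rep k M) ⋙ Rep.toModuleMonoidAlgebra
  have : IsSimpleModule (MonoidAlgebra k M) (F.obj (FDRep.of r)) :=
    (Representation.irreducible_iff_isSimpleModule_asModule r).1 inferInstance
  have : Simple (F.obj (FDRep.of r)) := (simple_iff_isSimpleModule' _).2 this
  exact F.simple_of_simple_obj _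

theorem character_mem_closure_simple {V : Type u} [AddCommGroup V] [Module k V]
    [FiniteDimensional k V] (r : Representation k M V) :
    r.character ∈
      AddSubmonoid.closure {f | ∃ W : FDRep k M, Simple W ∧ f = W.character} := by
  rcases subsingleton_or_nontrivial V with _ | _
  · exact character_eq_zero_of_subsingleton r ▸ zero_mem _
  by_cases hr : r.IsIrreducible
  · exact AddSubmonoid.subset_closure ⟨FDRep.of r, simple_of_isIrreducible r, rfl⟩
  obtain ⟨W, hbot, htop⟩ := exists_ne_bot_ne_top_of_not_isIrreducible hr
  have : finrank k W.toSubmodule < finrank k V := Submodule.finrank_lt htop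
  have : finrank k (V ⧸ W.toSubmodule) < finrank k V := finrank_quotient_lt_finrank hbot
  rw [character_eq_subrepresentation_add_quotient r W.toSubmodule W.apply_mem_toSubmodule]
  exact add_mem (character_mem_closure_simple _) (character_mem_closure_simple _)
termination_by finrank k V

end CompositionFactors

section InflatedCharacters

universe u v

theorem character_prod {k H V W : Type*} [Field k] [Monoid H] [AddCommGroup V] [Module k V]
    [FiniteDimensional k V] [AddCommGroup W] [Module k W] [FiniteDimensional k W]
    (r : Representation k H V) (s : Representation k H W) :
    (r.prod s).character = r.character + s.character := by
  ext g
  exact LinearMap.trace_prodMap' (r g) (s g)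

/-- The one-dimensional representation in which `g` acts as multiplication by `χ g`. -/
def scalarRepresentation {k H : Type*} [CommSemiring k] [Monoid H] (χ : H →* k) :
    Representation k H k :=
  (Algebra.lmul k k : k →* Module.End k k).comp χ

theorem character_scalarRepresentation {k H : Type*} [Field k] [Monoid H] (χ : H →* k) :
    (scalarRepresentation χ).character = χ := by
  ext g
  exact Algebra.trace_self_apply (χ g)

variable {k : Type u} {H : Type v} [Field k] [Group H]

/-- The characters of `H` inflated from `H ⧸ N`, that is, the characters of the finite-dimensional
representations on which `N` acts trivially. They form a semiring because such representations are
stable under direct sums and tensor products; the zero function is the character of the zero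
representation. -/
def inflatedCharacters (k : Type u) [Field k] (N : Subgroup H) : Subsemiring (H → k) where
  carrier := {f | ∃ W : FDRep k H, f = W.character ∧ ∀ n ∈ N, W.ρ n = 1}
  zero_mem' := ⟨FDRep.of (Representation.trivial k H PUnit.{u + 1}),
    (character_eq_zero_of_subsingleton _).symm, fun _ _ => rfl⟩
  one_mem' := ⟨FDRep.of (scalarRepresentation 1),
    (character_scalarRepresentation 1).symm, fun _ _ => map_one (Algebra.lmul k k)⟩
  add_mem' := by
    rintro _ _ ⟨V, rfl, hV⟩ ⟨W, rfl, hW⟩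
    refine ⟨FDRep.of (Representation.prod V.ρ W.ρ), (character_prod V.ρ W.ρ).symm, fun n hn => ?_⟩
    change (V.ρ n).prodMap (W.ρ n) = 1
    rw [hV n hn, hW n hn, LinearMap.prodMap_one]
  mul_mem' := by
    rintro _ _ ⟨V, rfl, hV⟩ ⟨W, rfl, hW⟩
    refine ⟨FDRep.of (Representation.tprod V.ρ W.ρ),
      (Representation.char_tensor V.ρ W.ρ).symm, fun n hn => ?_⟩
    change TensorProduct.map (V.ρ n) (W.ρ n) = 1
    rw [hV n hn, hW n hn, TensorProduct.map_one]

theorem mem_inflatedCharacters {N : Subgroup H} {f : H → k} :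
    f ∈ inflatedCharacters k N ↔ ∃ W : FDRep k H, f = W.character ∧ ∀ n ∈ N, W.ρ n = 1 :=
  Iff.rfl

theorem comp_mk_mem_inflatedCharacters (N : Subgroup H) [N.Normal] (χ : H ⧸ N →* k) :
    (fun g : H => χ g) ∈ inflatedCharacters k N := by
  let ψ : H →* k := χ.comp (QuotientGroup.mk' N)
  suffices ∀ n ∈ N, scalarRepresentation ψ n = 1 from mem_inflatedCharacters.2
    ⟨FDRep.of (scalarRepresentation ψ), (character_scalarRepresentation ψ).symm, this⟩
  intro n hn
  have h_one : ψ n = 1 := by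
    simp [ψ, (QuotientGroup.eq_one_iff n).2 hn]
  change Algebra.lmul k k (ψ n) = 1
  rw [h_one, map_one]

end InflatedCharacters

section Span

variable {N : Subgroup G} [N.Normal] {U : Set (G → ℂ)}

theorem mem_span_of_mem_qhatOrbit {ρ σ : G → ℂ} (hρ : ρ ∈ U) (hσ : σ ∈ qhatOrbit N ρ) :
    σ ∈ Submodule.span (inflatedCharacters ℂ N) U := by
  obtain ⟨χ, rfl⟩ := hσ
  let c : inflatedCharacters ℂ N :=
    ⟨_, comp_mk_mem_inflatedCharacters N ((Units.coeHom ℂ).comp χ)⟩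
  exact Submodule.smul_mem _ c (Submodule.subset_span hρ)

theorem IsChar.mem_span (hU : ∀ ρ, IsIrrChar G ρ → ∃ ρ' ∈ U, ρ ∈ qhatOrbit N ρ') {Θ : G → ℂ}
    (hΘ : IsChar G Θ) : Θ ∈ Submodule.span (inflatedCharacters ℂ N) U := by
  obtain ⟨V, rfl⟩ := hΘ
  have h_irr : {ρ | IsIrrChar G ρ} ⊆ Submodule.span (inflatedCharacters ℂ N) U := fun ρ hρ =>
    let ⟨_, hρ', h_orbit⟩ := hU ρ hρ
    mem_span_of_mem_qhatOrbit hρ' h_orbit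
  exact AddSubmonoid.closure_le (S := (Submodule.span _ U).toAddSubmonoid).2 h_irr
    (character_mem_closure_simple V.ρ)

end Span

theorem character_decomposition_general (N : Subgroup G) [N.Normal] (U : Set (G → ℂ))
    (hU : ∀ ρ : G → ℂ, IsIrrChar G ρ → ∃ ρ' ∈ U, ρ ∈ qhatOrbit N ρ')
    (Θ : G → ℂ) (hΘ : IsChar G Θ) :
    ∃ Ψ : (G → ℂ) → (G → ℂ), (Function.support Ψ).Finite ∧
      (∀ ρ, ∃ W : FDRep ℂ G, Ψ ρ = W.character ∧ ∀ n ∈ N, W.ρ n = 1) ∧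
      ∀ g : G, Θ g = ∑ᶠ ρ ∈ U, Ψ ρ g * ρ g := by
  obtain ⟨c, hcU, rfl⟩ := Submodule.mem_span_set.1 (hΘ.mem_span hU)
  have h_support {ρ : G → ℂ} (hρ : (c ρ : G → ℂ) ≠ 0) : ρ ∈ c.support :=
    Finsupp.mem_support_iff.2 fun h => hρ (congrArg Subtype.val h)
  refine ⟨fun ρ => (c ρ : G → ℂ), c.support.finite_toSet.subset fun ρ => h_support,
    fun ρ => mem_inflatedCharacters.1 (c ρ).2, fun g => ?_⟩
  rw [finsum_mem_eq_sum_of_subset _ (fun ρ hρ => h_support fun h => hρ.2 (by simp [h])) hcU,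
    Finsupp.sum, Finset.sum_apply]
  rfl

/-- For `G ⧸ N` cyclic and `U` a set of representatives of the
`Q̂`-orbits on `Irr G`, every character `Θ` of `G` can be written as
`Θ = ∑_{ρ ∈ U} Ψ_ρ ⊗ ρ` with each `Ψ_ρ` zero or a character of `G` trivial on `N`. -/
theorem character_decomposition
    (G : Type) [Group G] [Fintype G] (N : Subgroup G) [N.Normal]
    (hcyc : IsCyclic (G ⧸ N))
    (U : Set (G → ℂ))
    (hU1 : ∀ ρ ∈ U, IsIrrChar G ρ)
    (hU2 : ∀ ρ ∈ U, ∀ ρ' ∈ U, qhatOrbit N ρ = qhatOrbit N ρ' → ρ = ρ')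
    (hU3 : ∀ ρ : G → ℂ, IsIrrChar G ρ → ∃ ρ' ∈ U, ρ ∈ qhatOrbit N ρ')
    (Θ : G → ℂ) (hΘ : IsChar G Θ) :
    ∃ Ψ : (G → ℂ) → (G → ℂ),
      (∀ ρ ∈ U, Ψ ρ = 0 ∨
        ∃ W : FDRep ℂ G, Ψ ρ = W.character ∧ ∀ n ∈ N, W.ρ n = 1) ∧
      ∀ g : G, Θ g = ∑ᶠ ρ ∈ U, Ψ ρ g * ρ g := by
  obtain ⟨Ψ, -, h_inflated, h_sum⟩ := character_decomposition_general N U hU3 Θ hΘ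
  exact ⟨Ψ, fun ρ _ => .inr (h_inflated ρ), h_sum⟩
end
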